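/- Let k ≥ 1, let 0 < a_1 < ⋯ < a_k < 1 and 0 < b_1 < ⋯ < b_k < 1 be such that (1−a_s)(1−b_t) < 1/2 for all 1 ≤ s,t ≤ k, and let x_1,…,x_k, y_1,…,y_k : ℕ → ℕ be sequences with x_s(n)/n → a_s and y_t(n)/n → b_t as n → ∞. Write α_s(n) := x_s(n)/n and β_t(n) := y_t(n)/n. Then the ratio of the k×k determinant det( S(n, x_s(n), y_t(n)) )_{1≤s,t≤k} to the expression 2^{−k(k−1)/2} · (4πn)^{−k} · ∏_{s=1}^{k} [ √((1/α_s(n) − 1)·(1/β_s(n) − 1)) · (2 · α_s(n)^{α_s(n)} · (1−α_s(n))^{1−α_s(n)} · β_s(n)^{β_s(n)} · (1−β_s(n))^{1−β_s(n)})^{−n} ] · ∏_{1≤s<t≤k} (α_t(n)−α_s(n))·(β_t(n)−β_s(n)) / ∏_{s=1}^{k} ∏_{t=1}^{k} (1/2 − (1−α_s(n))(1−β_t(n))) tends to 1 as n → ∞ (all powers are real powers). -/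

import Mathlib

/-!
With `α = x/n`, `β = y/n`, consecutive terms of `S(n,x,y)` near `l = n - 1` have ratio
`C(l-1,x) C(l-1,y) 2 / (C(l,x) C(l,y)) = 2 (1 - x/l) (1 - y/l)`, which tends to
`2 (1-a) (1-b) < 1`. The sum is therefore dominated by its top terms and behaves like a geometric
series: by dominated convergence (`tendsto_delannoyPartialSum`),
`S(n,x,y) / (C(n,x) C(n,y) 2⁻ⁿ) → (1-a)(1-b)/2 · (1/2 - (1-a)(1-b))⁻¹`.

The normalising factor splits into a row factor and a column factor, so it comes out of the
determinant, and what remains converges to the determinant of a Cauchy-type matrix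
`(1/2 - u_s v_t)⁻¹` with `u = 1 - a`, `v = 1 - b`. That determinant is evaluated in closed form by
`det_cauchy_mul`; it is nonzero since the `a_s`, and the `b_t`, are distinct, so the limit of
determinants determines the asymptotics. The extracted binomial coefficients are converted to the
entropy form of the statement by Stirling's formula (`tendsto_choose_mul`, `tendsto_prefactor`).
-/

open Filter Real

/-- The partial sum `S(n,x,y) = ∑_{l=0}^{n−1} C(l,x) C(l,y) 2^{−(l+1)}`. -/
noncomputable def delannoyPartialSum (n x y : ℕ) : ℝ :=
  ∑ l ∈ Finset.range n, (Nat.choose l x : ℝ) * (Nat.choose l y : ℝ) / 2 ^ (l + 1)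

/-! ### A Cauchy determinant -/

/-- Cauchy's determinant in multiplicative form. The proof is by Gaussian elimination on the first
column: the Schur complement of the corner entry is again a matrix of the same form, up to row and
column factors. -/
theorem det_cauchy_mul (c : ℝ) (k : ℕ) (u v : Fin k → ℝ) (h : ∀ s t, c - u s * v t ≠ 0) :
    (Matrix.of fun s t : Fin k => (c - u s * v t)⁻¹).det =
      c ^ (k * (k - 1) / 2) *
        (∏ s : Fin k, ∏ t ∈ Finset.Ioi s, (u t - u s) * (v t - v s)) /
        ∏ s : Fin k, ∏ t : Fin k, (c - u s * v t) := by
  induction k with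
  | zero => simp
  | succ k ih =>
    -- Subtract multiples of row `0` to clear the rest of column `0`.
    let B : Matrix (Fin (k + 1)) (Fin (k + 1)) ℝ :=
      Matrix.of fun s t => if s = 0 then (c - u 0 * v t)⁻¹ else
        c * (u s - u 0) * (v t - v 0) *
          ((c - u s * v t) * (c - u s * v 0) * (c - u 0 * v t))⁻¹
    have hB : (Matrix.of fun s t : Fin (k + 1) => (c - u s * v t)⁻¹).det = B.det := by
      refine Matrix.det_eq_of_forall_row_eq_smul_add_const
        (fun s => if s = 0 then 0 else (c - u 0 * v 0) * (c - u s * v 0)⁻¹) 0 (by simp) ?_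
      intro s t
      by_cases hs : s = 0
      · simp [B, hs]
      · have h1 := h s t
        have h2 := h s 0
        have h3 := h 0 t
        have key : ∀ p q r w : ℝ, c - p * r ≠ 0 → c - p * w ≠ 0 → c - q * r ≠ 0 →
            (c - p * r)⁻¹ = c * (p - q) * (r - w) *
              ((c - p * r) * (c - p * w) * (c - q * r))⁻¹ +
              (c - q * w) * (c - p * w)⁻¹ * (c - q * r)⁻¹ := by
          intro p q r w h1 h2 h3
          have h3' : c - r * q ≠ 0 := by rwa [mul_comm r q]
          field_simp
          ring
        simp only [B, Matrix.of_apply, hs, if_false, if_true]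
        exact key _ _ _ _ h1 h2 h3
    have hsub : B.submatrix (Fin.succAbove 0) Fin.succ =
        Matrix.of fun s t : Fin k => (c * (u s.succ - u 0) * (c - u s.succ * v 0)⁻¹) *
          (Matrix.of fun s t : Fin k => ((v t.succ - v 0) * (c - u 0 * v t.succ)⁻¹) *
            (Matrix.of fun s t : Fin k => (c - u s.succ * v t.succ)⁻¹) s t) s t := by
      ext s t
      simp [B, Fin.succ_ne_zero]
      ring
    rw [hB, Matrix.det_succ_column_zero, Fin.sum_univ_succ, Finset.sum_eq_zero (by
      intro i _
      simp [B, Fin.succ_ne_zero]), hsub, Matrix.det_mul_column, Matrix.det_mul_row,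
      ih (fun s => u s.succ) (fun t => v t.succ) (fun s t => h _ _), Nat.triangle_succ]
    simp only [Fin.prod_univ_succ (n := k), Fin.prod_Ioi_zero, Fin.prod_Ioi_succ,
      Finset.prod_mul_distrib, Finset.prod_inv_distrib, Finset.prod_const, Finset.card_univ,
      Fintype.card_fin, pow_add]
    simp [B]
    have p1 : ∏ s : Fin k, (c - u s.succ * v 0) ≠ 0 := Finset.prod_ne_zero_iff.2 fun s _ => h _ _
    have p2 : ∏ s : Fin k, (c - u 0 * v s.succ) ≠ 0 := Finset.prod_ne_zero_iff.2 fun s _ => h _ _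
    have p3 : ∏ s : Fin k, ∏ t : Fin k, (c - u s.succ * v t.succ) ≠ 0 :=
      Finset.prod_ne_zero_iff.2 fun s _ => Finset.prod_ne_zero_iff.2 fun t _ => h _ _
    have p4 := h 0 0
    field_simp

/-! ### Asymptotics of the partial sums -/

/-- Each step `C(m,x) → C(m-1,x)` multiplies by `1 - x/m ≤ 1 - x/n`; this is the geometric bound
used for dominated convergence. -/
theorem choose_sub_le (n x j : ℕ) (hx : x ≤ n) (hj : j ≤ n) :
    ((n - j).choose x : ℝ) ≤ (1 - (x : ℝ) / n) ^ j * n.choose x := by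
  induction j with
  | zero => simp
  | succ j ih =>
    obtain ⟨m, hm⟩ : ∃ m, n - j = m + 1 := ⟨n - j - 1, by omega⟩
    have hm' : n - (j + 1) = m := by omega
    have ih := ih (by omega)
    rw [hm] at ih
    rw [hm']
    have hn : (0 : ℝ) < n := by exact_mod_cast (by omega : 0 < n)
    have h1 : (0 : ℝ) ≤ 1 - (x : ℝ) / n := by
      rw [sub_nonneg, div_le_one hn]; exact_mod_cast hx
    rcases lt_or_ge m x with hlt | hge
    · rw [Nat.choose_eq_zero_of_lt hlt]
      simp only [Nat.cast_zero]; positivity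
    have e : (m.choose x : ℝ) = (1 - (x : ℝ) / (m + 1)) * ((m + 1).choose x) := by
      have := Nat.choose_mul_succ_eq m x
      have h2 : ((m.choose x * (m + 1) : ℕ) : ℝ) = (((m + 1).choose x * (m + 1 - x) : ℕ) : ℝ) := by
        rw [this]
      rw [Nat.cast_mul, Nat.cast_mul, Nat.cast_sub (by omega)] at h2
      push_cast at h2
      field_simp
      linarith
    rw [e, pow_succ', mul_assoc]
    have h3 : 1 - (x : ℝ) / (m + 1) ≤ 1 - (x : ℝ) / n := by
      gcongr
      exact_mod_cast (by omega : m + 1 ≤ n)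
    exact mul_le_mul h3 ih (by positivity) h1

theorem tendsto_choose_sub_div_choose {x : ℕ → ℕ} {a : ℝ} (ha : a < 1)
    (hx : Tendsto (fun n => (x n : ℝ) / n) atTop (nhds a)) (j : ℕ) :
    Tendsto (fun n => ((n - j).choose (x n) : ℝ) / n.choose (x n)) atTop (nhds ((1 - a) ^ j)) := by
  have key : ∀ j : ℕ, Tendsto (fun n : ℕ => (x n : ℝ) / ((n - j : ℕ) : ℝ)) atTop (nhds a) := by
    intro j
    have h1 : Tendsto (fun n : ℕ => (n : ℝ) / ((n - j : ℕ) : ℝ)) atTop (nhds 1) := by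
      have h2 : Tendsto (fun n : ℕ => 1 + (j : ℝ) / (n : ℝ)) atTop (nhds (1 + 0)) :=
        tendsto_const_nhds.add (tendsto_const_div_atTop_nhds_zero_nat _)
      rw [add_zero] at h2
      refine (h2.comp (tendsto_sub_atTop_nat j)).congr' ?_
      filter_upwards [eventually_gt_atTop j] with n hn
      have : (0 : ℝ) < (n : ℝ) - j := sub_pos.2 (by exact_mod_cast hn)
      simp only [Function.comp]
      rw [Nat.cast_sub hn.le]
      field_simp
      ring
    have h3 := hx.mul h1
    rw [mul_one] at h3
    refine h3.congr' ?_
    filter_upwards [eventually_gt_atTop 0] with n hn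
    have : (0 : ℝ) < n := by exact_mod_cast hn
    field_simp
  have hle : ∀ j : ℕ, ∀ᶠ n in atTop, x n ≤ n - j := by
    intro j
    filter_upwards [(key j).eventually (gt_mem_nhds ha), eventually_gt_atTop j] with n h1 h2
    have h3 : (0 : ℝ) < ((n - j : ℕ) : ℝ) := by exact_mod_cast (by omega : 0 < n - j)
    rw [div_lt_one h3] at h1
    exact_mod_cast h1.le
  induction j with
  | zero =>
    simp only [pow_zero, Nat.sub_zero]
    refine tendsto_const_nhds.congr' ?_
    filter_upwards [hle 0] with n hn
    have : 0 < n.choose (x n) := Nat.choose_pos (by simpa using hn)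
    rw [div_self]
    exact_mod_cast this.ne'
  | succ j ih =>
    have h1 := ih.mul (tendsto_const_nhds (x := (1 : ℝ)) |>.sub (key j))
    rw [pow_succ]
    refine h1.congr' ?_
    filter_upwards [hle j, eventually_gt_atTop j] with n hn hj
    obtain ⟨m, hm⟩ : ∃ m, n - j = m + 1 := ⟨n - j - 1, by omega⟩
    have hm' : n - (j + 1) = m := by omega
    rw [hm', hm]
    rw [hm] at hn
    have h2 : ((m.choose (x n) * (m + 1) : ℕ) : ℝ) =
        (((m + 1).choose (x n) * (m + 1 - x n) : ℕ) : ℝ) := by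
      rw [Nat.choose_mul_succ_eq]
    rw [Nat.cast_mul, Nat.cast_mul, Nat.cast_sub hn] at h2
    push_cast at h2 ⊢
    rw [div_mul_eq_mul_div]
    congr 1
    field_simp
    linarith

theorem eventually_mem_Ioo {x : ℕ → ℕ} {a : ℝ} (ha : 0 < a ∧ a < 1)
    (hx : Tendsto (fun n => (x n : ℝ) / n) atTop (nhds a)) :
    ∀ᶠ n : ℕ in atTop, 0 < n ∧ 0 < x n ∧ x n < n := by
  filter_upwards [hx.eventually (lt_mem_nhds ha.1), hx.eventually (gt_mem_nhds ha.2),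
    eventually_gt_atTop 0] with n h1 h2 hn
  have hn' : (0 : ℝ) < n := by exact_mod_cast hn
  rw [div_lt_one hn'] at h2
  rw [lt_div_iff₀ hn', zero_mul] at h1
  exact ⟨hn, by exact_mod_cast h1, by exact_mod_cast h2⟩

/-- The sum `S(n,x,y)`, normalised by `C(n,x) C(n,y) 2⁻ⁿ`, converges to the sum of the geometric
series `∑ⱼ 2ʲ ((1-a)(1-b))^(j+1)`. -/
theorem tendsto_delannoyPartialSum {x y : ℕ → ℕ} {a b : ℝ} (ha : 0 < a ∧ a < 1)
    (hb : 0 < b ∧ b < 1) (hab : (1 - a) * (1 - b) < 1 / 2)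
    (hx : Tendsto (fun n => (x n : ℝ) / n) atTop (nhds a))
    (hy : Tendsto (fun n => (y n : ℝ) / n) atTop (nhds b)) :
    Tendsto (fun n : ℕ => delannoyPartialSum n (x n) (y n) /
        ((n.choose (x n) : ℝ) * n.choose (y n) / 2 ^ n)) atTop
      (nhds ((1 - a) * (1 - b) / 2 * (1 / 2 - (1 - a) * (1 - b))⁻¹)) := by
  obtain ⟨ρ, hρ1, hρ2⟩ := exists_between hab
  have hpos : 0 < (1 - a) * (1 - b) := mul_pos (by linarith [ha.2]) (by linarith [hb.2])
  -- `f n j` is the normalised term of index `l = n - 1 - j`, extended by `0`.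
  let f : ℕ → ℕ → ℝ := fun n j => if j < n then
    2 ^ j * (((n - (j + 1)).choose (x n) : ℝ) / n.choose (x n) *
      (((n - (j + 1)).choose (y n) : ℝ) / n.choose (y n))) else 0
  have hlim : Tendsto (fun n => ∑' j, f n j) atTop
      (nhds (∑' j : ℕ, 2 ^ j * ((1 - a) ^ (j + 1) * (1 - b) ^ (j + 1)))) := by
    refine tendsto_tsum_of_dominated_convergence (bound := fun j => ρ * (2 * ρ) ^ j)
      ((summable_geometric_of_lt_one (by linarith) (by linarith)).mul_left _) ?_ ?_
    · intro j
      refine (((tendsto_choose_sub_div_choose ha.2 hx (j + 1)).mul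
        (tendsto_choose_sub_div_choose hb.2 hy (j + 1))).const_mul (2 ^ j)).congr' ?_
      filter_upwards [eventually_gt_atTop j] with n hn
      simp [f, hn]
    · have hu := (hx.const_sub 1).mul (hy.const_sub 1)
      filter_upwards [eventually_mem_Ioo ha hx, eventually_mem_Ioo hb hy,
        hu.eventually (gt_mem_nhds hρ1)] with n h1 h2 h3 j
      have hn : (0 : ℝ) < n := by exact_mod_cast h1.1
      have hx1 : (0 : ℝ) ≤ 1 - (x n : ℝ) / n := by
        rw [sub_nonneg, div_le_one hn]; exact_mod_cast h1.2.2.le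
      have hy1 : (0 : ℝ) ≤ 1 - (y n : ℝ) / n := by
        rw [sub_nonneg, div_le_one hn]; exact_mod_cast h2.2.2.le
      by_cases hj : j < n
      · simp only [f, hj, if_true]
        rw [Real.norm_of_nonneg (by positivity)]
        have cx : (0 : ℝ) < n.choose (x n) := by exact_mod_cast Nat.choose_pos h1.2.2.le
        have cy : (0 : ℝ) < n.choose (y n) := by exact_mod_cast Nat.choose_pos h2.2.2.le
        have e1 : ((n - (j + 1)).choose (x n) : ℝ) / n.choose (x n) ≤
            (1 - (x n : ℝ) / n) ^ (j + 1) := by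
          rw [div_le_iff₀ cx]; exact choose_sub_le n _ _ h1.2.2.le hj
        have e2 : ((n - (j + 1)).choose (y n) : ℝ) / n.choose (y n) ≤
            (1 - (y n : ℝ) / n) ^ (j + 1) := by
          rw [div_le_iff₀ cy]; exact choose_sub_le n _ _ h2.2.2.le hj
        calc _ ≤ 2 ^ j * ((1 - (x n : ℝ) / n) ^ (j + 1) * (1 - (y n : ℝ) / n) ^ (j + 1)) := by
              gcongr
          _ = 2 ^ j * ((1 - (x n : ℝ) / n) * (1 - (y n : ℝ) / n)) ^ (j + 1) := by
              rw [mul_pow]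
          _ ≤ 2 ^ j * ρ ^ (j + 1) := by gcongr
          _ = ρ * (2 * ρ) ^ j := by rw [mul_pow]; ring
      · simp only [f, hj, if_false, norm_zero]
        have : 0 < ρ := by linarith
        positivity
  have hval : ∑' j : ℕ, 2 ^ j * ((1 - a) ^ (j + 1) * (1 - b) ^ (j + 1)) =
      (1 - a) * (1 - b) / 2 * (1 / 2 - (1 - a) * (1 - b))⁻¹ := by
    have : ∀ j : ℕ, (2 : ℝ) ^ j * ((1 - a) ^ (j + 1) * (1 - b) ^ (j + 1)) =
        (1 - a) * (1 - b) * (2 * ((1 - a) * (1 - b))) ^ j := by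
      intro j; rw [mul_pow, mul_pow]; ring
    simp_rw [this]
    rw [tsum_mul_left, tsum_geometric_of_lt_one (by linarith) (by linarith)]
    rw [show 1 - 2 * ((1 - a) * (1 - b)) = 2 * (1 / 2 - (1 - a) * (1 - b)) by ring, mul_inv]
    ring
  rw [hval] at hlim
  refine hlim.congr fun n => ?_
  rw [tsum_eq_sum (s := Finset.range n) (by intro j hj; simp [f] at hj ⊢; omega),
    delannoyPartialSum, 
    ← Finset.sum_range_reflect (fun l => (Nat.choose l (x n) : ℝ) * (Nat.choose l (y n) : ℝ) /
      2 ^ (l + 1)), Finset.sum_div]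
  refine Finset.sum_congr rfl fun j hj => ?_
  have hj : j < n := Finset.mem_range.1 hj
  simp only [f, hj, if_true]
  rw [show n - 1 - j = n - (j + 1) by omega]
  have e : (2 : ℝ) ^ n = 2 ^ j * 2 ^ (n - (j + 1) + 1) := by
    rw [← pow_add]; congr 1; omega
  rw [e]
  field_simp

/-! ### Stirling's formula for binomial coefficients -/

/-- The powers of `e` in the three Stirling approximations cancel, which makes this relation exact. -/
theorem choose_stirling (m p : ℕ) (hm : 0 < m) (hp : 0 < p) :
    ((m + p).choose m : ℝ) * √((m + p : ℝ) * ((m / (m + p)) * (p / (m + p)))) *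
      (((m : ℝ) / (m + p)) ^ m * ((p : ℝ) / (m + p)) ^ p) =
      Stirling.stirlingSeq (m + p) / (Stirling.stirlingSeq m * Stirling.stirlingSeq p) / √2 := by
  have hm' : (0 : ℝ) < m := by exact_mod_cast hm
  have hp' : (0 : ℝ) < p := by exact_mod_cast hp
  rw [Nat.cast_add_choose ℝ]
  have e : √((m + p : ℝ) * ((m / (m + p)) * (p / (m + p)))) = √m * √p / √(m + p) := by
    rw [← Real.sqrt_mul hm'.le, ← Real.sqrt_div (by positivity)]
    congr 1
    field_simp
  rw [e]
  simp only [Stirling.stirlingSeq, Nat.cast_add, div_pow]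
  rw [Real.sqrt_mul (by norm_num), Real.sqrt_mul (by norm_num), Real.sqrt_mul (by norm_num)]
  have h1 : √(2 : ℝ) * √2 = 2 := Real.mul_self_sqrt (by norm_num)
  have h2 : √(m + p : ℝ) * √(m + p : ℝ) = m + p := Real.mul_self_sqrt (by positivity)
  have f1 : (0 : ℝ) < (m.factorial : ℝ) := by exact_mod_cast m.factorial_pos
  have f2 : (0 : ℝ) < (p.factorial : ℝ) := by exact_mod_cast p.factorial_pos
  have h3 : (0 : ℝ) < √(m + p : ℝ) := by positivity
  rw [pow_add, pow_add]
  field_simp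

/-- Stirling's formula for binomial coefficients: with `α = x/n`,
`C(n,x) ∼ (2πnα(1-α))^(-1/2) (α^α (1-α)^(1-α))⁻ⁿ`. -/
theorem tendsto_choose_mul {x : ℕ → ℕ} {a : ℝ} (ha : 0 < a ∧ a < 1)
    (hx : Tendsto (fun n => (x n : ℝ) / n) atTop (nhds a)) :
    Tendsto (fun n : ℕ => (n.choose (x n) : ℝ) *
      √((n : ℝ) * (((x n : ℝ) / n) * (1 - (x n : ℝ) / n))) *
      (((x n : ℝ) / n) ^ ((x n : ℝ) / n) *
        (1 - (x n : ℝ) / n) ^ (1 - (x n : ℝ) / n)) ^ (n : ℝ)) atTop (nhds (√(2 * π))⁻¹) := by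
  have hxt : Tendsto x atTop atTop := by
    have : Tendsto (fun n : ℕ => ((x n : ℝ) / n) * n) atTop atTop :=
      hx.pos_mul_atTop ha.1 tendsto_natCast_atTop_atTop
    rw [← tendsto_natCast_atTop_iff (R := ℝ)]
    refine this.congr' ?_
    filter_upwards [eventually_gt_atTop 0] with n hn
    have : (n : ℝ) ≠ 0 := by exact_mod_cast hn.ne'
    field_simp
  have hyt : Tendsto (fun n => n - x n) atTop atTop := by
    have : Tendsto (fun n : ℕ => (1 - (x n : ℝ) / n) * n) atTop atTop :=
      (hx.const_sub 1).pos_mul_atTop (by linarith [ha.2]) tendsto_natCast_atTop_atTop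
    rw [← tendsto_natCast_atTop_iff (R := ℝ)]
    refine this.congr' ?_
    filter_upwards [eventually_mem_Ioo ha hx] with n hn
    have : (n : ℝ) ≠ 0 := by exact_mod_cast hn.1.ne'
    rw [Nat.cast_sub hn.2.2.le]
    field_simp
  have hS := Stirling.tendsto_stirlingSeq_sqrt_pi
  have hl := (hS.div ((hS.comp hxt).mul (hS.comp hyt)) (by positivity)).div_const √2
  have e : √π / (√π * √π) / √2 = (√(2 * π))⁻¹ := by
    rw [Real.sqrt_mul (by norm_num)]
    field_simp
  rw [e] at hl
  refine hl.congr' ?_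
  filter_upwards [eventually_mem_Ioo ha hx] with n hn
  obtain ⟨h0, h1, h2⟩ := hn
  simp only [Pi.div_apply, Function.comp]
  obtain ⟨p, hp⟩ : ∃ p, n = x n + p := ⟨n - x n, by omega⟩
  have hp0 : 0 < p := by omega
  generalize x n = m at h1 h2 hp ⊢
  subst hp
  rw [Nat.add_sub_cancel_left]
  have hm' : (0 : ℝ) < m := by exact_mod_cast h1
  have hp' : (0 : ℝ) < p := by exact_mod_cast hp0
  have h1a : 1 - (m : ℝ) / ((m + p : ℕ) : ℝ) = p / (m + p) := by
    push_cast; field_simp; ring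
  rw [h1a, ← choose_stirling m p h1 hp0]
  push_cast
  congr 1
  rw [Real.mul_rpow (by positivity) (by positivity), ← Real.rpow_mul (by positivity),
    ← Real.rpow_mul (by positivity), div_mul_cancel₀ _ (by positivity),
    div_mul_cancel₀ _ (by positivity), Real.rpow_natCast, Real.rpow_natCast]

/-- The normalising factor `C(n,x) C(n,y) 2⁻ⁿ` compared with the contribution
`(4πn)⁻¹ √((1/α-1)(1/β-1)) (2 α^α ⋯)⁻ⁿ` of one index to the asserted asymptotic expression. -/
theorem tendsto_prefactor {x y : ℕ → ℕ} {a b : ℝ} (ha : 0 < a ∧ a < 1) (hb : 0 < b ∧ b < 1)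
    (hx : Tendsto (fun n => (x n : ℝ) / n) atTop (nhds a))
    (hy : Tendsto (fun n => (y n : ℝ) / n) atTop (nhds b)) :
    Tendsto (fun n : ℕ => ((n.choose (x n) : ℝ) * n.choose (y n) / 2 ^ n) /
      ((4 * π * n)⁻¹ *
        (√((1 / ((x n : ℝ) / n) - 1) * (1 / ((y n : ℝ) / n) - 1)) *
          (2 * ((x n : ℝ) / n) ^ ((x n : ℝ) / n) *
            (1 - (x n : ℝ) / n) ^ (1 - (x n : ℝ) / n) *
            ((y n : ℝ) / n) ^ ((y n : ℝ) / n) *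
            (1 - (y n : ℝ) / n) ^ (1 - (y n : ℝ) / n)) ^ (-(n : ℝ))))) atTop
      (nhds (2 / ((1 - a) * (1 - b)))) := by
  have ha' : 0 < 1 - a := by linarith [ha.2]
  have hb' : 0 < 1 - b := by linarith [hb.2]
  have hl := (((tendsto_choose_mul ha hx).mul (tendsto_choose_mul hb hy)).const_mul (4 * π)).div
    ((hx.const_sub 1).mul (hy.const_sub 1)) (by positivity)
  have e : 4 * π * ((√(2 * π))⁻¹ * (√(2 * π))⁻¹) / ((1 - a) * (1 - b)) =
      2 / ((1 - a) * (1 - b)) := by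
    rw [← mul_inv, Real.mul_self_sqrt (by positivity)]
    congr 1
    field_simp
    norm_num
  rw [e] at hl
  refine hl.congr' ?_
  filter_upwards [eventually_mem_Ioo ha hx, eventually_mem_Ioo hb hy] with n h1 h2
  have hn : (0 : ℝ) < n := by exact_mod_cast h1.1
  have pα : 0 < (x n : ℝ) / n := div_pos (by exact_mod_cast h1.2.1) hn
  have pβ : 0 < (y n : ℝ) / n := div_pos (by exact_mod_cast h2.2.1) hn
  have qα : 0 < 1 - (x n : ℝ) / n := by
    rw [sub_pos, div_lt_one hn]; exact_mod_cast h1.2.2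
  have qβ : 0 < 1 - (y n : ℝ) / n := by
    rw [sub_pos, div_lt_one hn]; exact_mod_cast h2.2.2
  simp only [Pi.div_apply]
  -- From here on the claim is an algebraic identity in `α`, `β`, the binomials and square roots.
  generalize (x n : ℝ) / n = α at *
  generalize (y n : ℝ) / n = β at *
  generalize (n.choose (x n) : ℝ) = X
  generalize (n.choose (y n) : ℝ) = Y
  have s1 : √((1 / α - 1) * (1 / β - 1)) =
      (√(1 - α) * √(1 - β)) / (√α * √β) := by
    rw [← Real.sqrt_mul qα.le, ← Real.sqrt_mul pα.le, ← Real.sqrt_div (by positivity)]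
    congr 1
    field_simp
  have hA : 0 < α ^ α * (1 - α) ^ (1 - α) := by positivity
  have hB : 0 < β ^ β * (1 - β) ^ (1 - β) := by positivity
  have s2 : (2 * α ^ α * (1 - α) ^ (1 - α) * β ^ β * (1 - β) ^ (1 - β)) ^ (-(n : ℝ)) =
      (2 ^ n * (α ^ α * (1 - α) ^ (1 - α)) ^ (n : ℝ) *
        (β ^ β * (1 - β) ^ (1 - β)) ^ (n : ℝ))⁻¹ := by
    rw [show 2 * α ^ α * (1 - α) ^ (1 - α) * β ^ β * (1 - β) ^ (1 - β) =
        2 * (α ^ α * (1 - α) ^ (1 - α)) * (β ^ β * (1 - β) ^ (1 - β)) by ring,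
      Real.rpow_neg (by positivity), Real.mul_rpow (by positivity) hB.le,
      Real.mul_rpow (by norm_num) hA.le, Real.rpow_natCast 2 n]
  rw [s1, s2, Real.sqrt_mul hn.le, Real.sqrt_mul hn.le, Real.sqrt_mul pα.le, Real.sqrt_mul pβ.le]
  have hA' := Real.rpow_pos_of_pos hA n
  have hB' := Real.rpow_pos_of_pos hB n
  generalize (α ^ α * (1 - α) ^ (1 - α)) ^ (n : ℝ) = A at *
  generalize (β ^ β * (1 - β) ^ (1 - β)) ^ (n : ℝ) = B at *
  have r1 : √(n : ℝ) ^ 2 = n := Real.sq_sqrt hn.le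
  have r2 : √(1 - α) ^ 2 = 1 - α := Real.sq_sqrt qα.le
  have r3 : √(1 - β) ^ 2 = 1 - β := Real.sq_sqrt qβ.le
  have t1 : 0 < √(n : ℝ) := Real.sqrt_pos.2 hn
  have t2 : 0 < √(1 - α) := Real.sqrt_pos.2 qα
  have t3 : 0 < √(1 - β) := Real.sqrt_pos.2 qβ
  have t4 : 0 < √α := Real.sqrt_pos.2 pα
  have t5 : 0 < √β := Real.sqrt_pos.2 pβ
  have t6 : (0 : ℝ) < 2 ^ n := by positivity
  generalize (2 : ℝ) ^ n = D at *
  generalize √(n : ℝ) = N at *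
  generalize √(1 - α) = P at *
  generalize √(1 - β) = Q at *
  rw [← r1, ← r2, ← r3]
  field_simp

/-! ### The determinant -/

/-- Theorem 4.6 of the paper, in tiling-free form: for dents at positions `x_s(n) ∼ a_s n` and
`y_t(n) ∼ b_t n` with all segments crossing the inscribed circle (i.e.
`(1−a_s)(1−b_t) < 1/2` for all `s, t`), the determinant `det(S(n, x_s(n), y_t(n)))_{s,t}` is
asymptotic to the explicit product of linear factors given on the right-hand side of (4.10). -/
theorem det_delannoyPartialSum_asymptotics (k : ℕ) (hk : 1 ≤ k)
    (a b : Fin k → ℝ)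
    (ha : ∀ s, 0 < a s ∧ a s < 1) (hb : ∀ t, 0 < b t ∧ b t < 1)
    (haMono : StrictMono a) (hbMono : StrictMono b)
    (hcross : ∀ s t, (1 - a s) * (1 - b t) < 1 / 2)
    (x y : Fin k → ℕ → ℕ)
    (hx : ∀ s, Tendsto (fun n => (x s n : ℝ) / n) atTop (nhds (a s)))
    (hy : ∀ t, Tendsto (fun n => (y t n : ℝ) / n) atTop (nhds (b t))) :
    Tendsto (fun n : ℕ =>
        (Matrix.of fun s t : Fin k => delannoyPartialSum n (x s n) (y t n)).det /
          (((2 : ℝ) ^ (k * (k - 1) / 2))⁻¹ * ((4 * Real.pi * n) ^ k)⁻¹ *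
            (∏ s : Fin k,
              Real.sqrt ((1 / ((x s n : ℝ) / n) - 1) * (1 / ((y s n : ℝ) / n) - 1)) *
                (2 * ((x s n : ℝ) / n) ^ ((x s n : ℝ) / n) *
                  (1 - (x s n : ℝ) / n) ^ (1 - (x s n : ℝ) / n) *
                  ((y s n : ℝ) / n) ^ ((y s n : ℝ) / n) *
                  (1 - (y s n : ℝ) / n) ^ (1 - (y s n : ℝ) / n)) ^ (-(n : ℝ))) *
            (∏ s : Fin k, ∏ t ∈ Finset.Ioi s,
              ((x t n : ℝ) / n - (x s n : ℝ) / n) * ((y t n : ℝ) / n - (y s n : ℝ) / n)) /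
            ∏ s : Fin k, ∏ t : Fin k,
              (1 / 2 - (1 - (x s n : ℝ) / n) * (1 - (y t n : ℝ) / n))))
      atTop (nhds 1) := by
  have ha' : ∀ s, 0 < 1 - a s := fun s => by linarith [(ha s).2]
  have hb' : ∀ s, 0 < 1 - b s := fun s => by linarith [(hb s).2]
  have hden : ∀ s t, 1 / 2 - (1 - a s) * (1 - b t) ≠ 0 := fun s t =>
    (sub_pos.2 (hcross s t)).ne'
  -- `K α β` is the value of the Cauchy determinant with `u = 1 - α`, `v = 1 - β`.
  let K : (Fin k → ℝ) → (Fin k → ℝ) → ℝ := fun α β => (2 ^ (k * (k - 1) / 2))⁻¹ *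
    (∏ s : Fin k, ∏ t ∈ Finset.Ioi s, (α t - α s) * (β t - β s)) /
      ∏ s : Fin k, ∏ t : Fin k, (1 / 2 - (1 - α s) * (1 - β t))
  have hK0 : K a b ≠ 0 := by
    refine div_ne_zero (mul_ne_zero (by positivity) ?_) ?_
    · refine Finset.prod_ne_zero_iff.2 fun s _ => Finset.prod_ne_zero_iff.2 fun t ht => ?_
      have hst : s < t := Finset.mem_Ioi.1 ht
      exact mul_ne_zero (sub_pos.2 (haMono hst)).ne' (sub_pos.2 (hbMono hst)).ne'
    · exact Finset.prod_ne_zero_iff.2 fun s _ => Finset.prod_ne_zero_iff.2 fun t _ => hden s t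
  have hKlim : Tendsto (fun n : ℕ => K (fun s => (x s n : ℝ) / n) (fun t => (y t n : ℝ) / n))
      atTop (nhds (K a b)) := by
    refine Tendsto.div (Tendsto.const_mul _ ?_) ?_ ?_
    · exact tendsto_finsetProd _ fun s _ => tendsto_finsetProd _ fun t _ =>
        ((hx t).sub (hx s)).mul ((hy t).sub (hy s))
    · exact tendsto_finsetProd _ fun s _ => tendsto_finsetProd _ fun t _ =>
        (((hx s).const_sub 1).mul ((hy t).const_sub 1)).const_sub _
    · exact Finset.prod_ne_zero_iff.2 fun s _ => Finset.prod_ne_zero_iff.2 fun t _ => hden s t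
  let L : Matrix (Fin k) (Fin k) ℝ := Matrix.of fun s t =>
    (1 - a s) * (1 - b t) / 2 * (1 / 2 - (1 - a s) * (1 - b t))⁻¹
  have hLdet : L.det = (∏ s, (1 - a s) * (1 - b s) / 2) * K a b := by
    have hL : L = Matrix.of fun s t => (1 - a s) * (Matrix.of fun s t => ((1 - b t) / 2) *
        (Matrix.of fun s t : Fin k => (1 / 2 - (1 - a s) * (1 - b t))⁻¹) s t) s t := by
      ext s t
      simp only [L, Matrix.of_apply]
      ring
    rw [hL, Matrix.det_mul_column, Matrix.det_mul_row,
      det_cauchy_mul (1 / 2) k (fun s => 1 - a s) (fun t => 1 - b t) hden, ← mul_assoc,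
      ← Finset.prod_mul_distrib]
    have h1 : ∀ s t, (1 - a t - (1 - a s)) * (1 - b t - (1 - b s)) =
        (a t - a s) * (b t - b s) := fun s t => by ring
    simp only [h1, K, one_div, inv_pow, mul_div_assoc]
  let M : ℕ → Matrix (Fin k) (Fin k) ℝ := fun n => Matrix.of fun s t =>
    delannoyPartialSum n (x s n) (y t n) / ((n.choose (x s n) : ℝ) * n.choose (y t n) / 2 ^ n)
  have hM : Tendsto M atTop (nhds L) :=
    tendsto_pi_nhds.2 fun s => tendsto_pi_nhds.2 fun t =>
      tendsto_delannoyPartialSum (ha s) (hb t) (hcross s t) (hx s) (hy t)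
  have hMdet : Tendsto (fun n => (M n).det) atTop (nhds L.det) :=
    ((continuous_id.matrix_det).tendsto L).comp hM
  -- `hq` contributes `∏ 2 / ((1 - a s) (1 - b s))`, which cancels the row and column factors
  -- of `L.det`.
  have hq := tendsto_finsetProd Finset.univ fun (s : Fin k) _ =>
    tendsto_prefactor (ha s) (hb s) (hx s) (hy s)
  have hfin := (hq.mul hMdet).div hKlim hK0
  have hone : (∏ s, 2 / ((1 - a s) * (1 - b s))) * L.det / K a b = 1 := by
    rw [hLdet, ← mul_assoc, ← Finset.prod_mul_distrib, Finset.prod_eq_one, one_mul, div_self hK0]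
    intro s _
    have := ha' s
    have := hb' s
    field_simp
  rw [hone] at hfin
  refine hfin.congr' ?_
  have hevx := eventually_all.2 fun s => eventually_mem_Ioo (ha s) (hx s)
  have hevy := eventually_all.2 fun s => eventually_mem_Ioo (hb s) (hy s)
  filter_upwards [hevx, hevy] with n h1 h2
  have cx : ∀ s, (n.choose (x s n) : ℝ) ≠ 0 := fun s => by
    exact_mod_cast (Nat.choose_pos (h1 s).2.2.le).ne'
  have cy : ∀ s, (n.choose (y s n) : ℝ) ≠ 0 := fun s => by
    exact_mod_cast (Nat.choose_pos (h2 s).2.2.le).ne'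
  have hS : (Matrix.of fun s t : Fin k => delannoyPartialSum n (x s n) (y t n)).det =
      (∏ s, (n.choose (x s n) : ℝ) * n.choose (y s n) / 2 ^ n) * (M n).det := by
    have : (Matrix.of fun s t : Fin k => delannoyPartialSum n (x s n) (y t n)) =
        Matrix.of fun s t => (n.choose (x s n) : ℝ) *
          (Matrix.of fun s t => ((n.choose (y t n) : ℝ) / 2 ^ n) * M n s t) s t := by
      ext s t
      have := cx s
      have := cy t
      simp only [M, Matrix.of_apply]
      field_simp
    rw [this, Matrix.det_mul_column, Matrix.det_mul_row, ← mul_assoc,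
      ← Finset.prod_mul_distrib]
    simp only [mul_div_assoc]
  rw [hS]
  simp only [Pi.div_apply, K]
  rw [Finset.prod_div_distrib, Finset.prod_mul_distrib (f := fun _ => (4 * π * (n : ℝ))⁻¹),
    Finset.prod_const, Finset.card_univ, Fintype.card_fin, inv_pow,
    div_mul_eq_mul_div, div_div]
  congr 1
  ring
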